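/- arXiv:math/0605002 — 3 statements merged into one kernel-verified Lean document; each statement's English description precedes it below -/
import Mathlib

section
/- Let X be a length space, let Y ⊆ X be nonempty, and let F₁, F₂ : Y → ℝ be bounded Lipschitz functions with absolutely minimal (AM) extensions u₁, u₂ : X → ℝ respectively. Fix L > 0 and set Z_L := {x ∈ X : Lip_x u₁ > L}, where Lip_x u := inf{Lip_W u : W ⊆ X open, x ∈ W}. Suppose that F₁ = F₂ on Z_L ∩ Y, that Lip_{Y∖Z_L} F₂ ≤ L, and that sup{|F₂(y) − u₁(x)|/d(y,x) : y ∈ Y∖Z_L, x ∈ Z_L} ≤ L. Then u₁ = u₂ on Z_L. -/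
open Metric Set

noncomputable section

/-- The length of a continuous path: its total variation. -/
def pathLength {X : Type*} [MetricSpace X] {x y : X} (γ : Path x y) : ENNReal :=
  eVariationOn (fun t => γ t) (Set.univ : Set unitInterval)

/-- A metric space is a length space if the distance between any two points equals the
infimum of the lengths of continuous paths joining them. -/
def IsLengthSpace (X : Type*) [MetricSpace X] : Prop :=
  ∀ x y : X, edist x y = ⨅ γ : Path x y, pathLength γ

/-- The (possibly infinite) Lipschitz constant of `u` on `S`:
`Lip_S u = sup {|u x - u y| / d(x,y) : x, y ∈ S, x ≠ y}`. -/
def lipOn {X : Type*} [MetricSpace X] (u : X → ℝ) (S : Set X) : ENNReal :=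
  ⨆ (x : X) (_ : x ∈ S) (y : X) (_ : y ∈ S) (_ : x ≠ y),
    ENNReal.ofReal (|u x - u y| / dist x y)

/-- `u : X → ℝ` is an absolutely minimal (AM) extension of `F` prescribed on `Y`:
`u` is Lipschitz, `u = F` on `Y`, and `Lip_U u = Lip_{∂U} u` for every open `U ⊆ X \ Y`. -/
def IsAMExtension {X : Type*} [MetricSpace X] (Y : Set X) (F u : X → ℝ) : Prop :=
  lipOn u Set.univ < ⊤ ∧ Set.EqOn u F Y ∧
    ∀ U : Set X, IsOpen U → U ⊆ Yᶜ → lipOn u U = lipOn u (frontier U)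

/-- The pointwise Lipschitz constant `Lip_x u = inf {Lip_W u : W open, x ∈ W}`. -/
def lipAt {X : Type*} [MetricSpace X] (u : X → ℝ) (x : X) : ENNReal :=
  ⨅ (W : Set X) (_ : IsOpen W) (_ : x ∈ W), lipOn u W

lemma lipOn_le_iff {X : Type*} [MetricSpace X] {u : X → ℝ} {S : Set X} {K : ℝ} (hK : 0 ≤ K) :
    lipOn u S ≤ ENNReal.ofReal K ↔ ∀ x ∈ S, ∀ y ∈ S, |u x - u y| ≤ K * dist x y := by
  unfold lipOn
  simp only [iSup_le_iff]
  refine ⟨fun h x hx y hy => ?_, fun h x hx y hy hxy => ?_⟩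
  · by_cases hxy : x = y
    · subst hxy; simp
    · have := h x hx y hy hxy
      rw [ENNReal.ofReal_le_ofReal_iff hK, div_le_iff₀ (dist_pos.2 hxy)] at this
      exact this
  · rw [ENNReal.ofReal_le_ofReal_iff hK, div_le_iff₀ (dist_pos.2 hxy)]
    exact h x hx y hy

lemma lipOn_neg {X : Type*} [MetricSpace X] (u : X → ℝ) (S : Set X) :
    lipOn (fun x => - u x) S = lipOn u S := by
  unfold lipOn
  have : ∀ x y, |(- u x) - (- u y)| = |u x - u y| := fun x y => by
    rw [← abs_neg]; congr 1; ring
  simp only [this]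

lemma lipAt_neg {X : Type*} [MetricSpace X] (u : X → ℝ) (x : X) :
    lipAt (fun x => - u x) x = lipAt u x := by
  unfold lipAt
  simp only [lipOn_neg]

lemma IsAMExtension.neg {X : Type*} [MetricSpace X] {Y : Set X} {F u : X → ℝ}
    (h : IsAMExtension Y F u) : IsAMExtension Y (fun x => - F x) (fun x => - u x) := by
  refine ⟨by rw [lipOn_neg]; exact h.1, fun y hy => ?_, fun U hU hUY => ?_⟩
  · simp only [h.2.1 hy]
  · rw [lipOn_neg, lipOn_neg]; exact h.2.2 U hU hUY

lemma IsAMExtension.exists_lip {X : Type*} [MetricSpace X] {Y : Set X} {F u : X → ℝ}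
    (h : IsAMExtension Y F u) : ∃ K : ℝ, 0 ≤ K ∧ ∀ x y, |u x - u y| ≤ K * dist x y := by
  refine ⟨(lipOn u univ).toReal, ENNReal.toReal_nonneg, fun x y => ?_⟩
  refine (lipOn_le_iff ENNReal.toReal_nonneg).1 ?_ x (mem_univ x) y (mem_univ y)
  rw [ENNReal.ofReal_toReal h.1.ne]

lemma cont_of_lip {X : Type*} [MetricSpace X] {u : X → ℝ} {K : ℝ} (hK : 0 ≤ K)
    (h : ∀ x y, |u x - u y| ≤ K * dist x y) : Continuous u := by
  have : LipschitzWith ⟨K, hK⟩ u := LipschitzWith.of_dist_le_mul fun x y => by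
    rw [Real.dist_eq]; exact h x y
  exact this.continuous

lemma exists_curve {X : Type*} [MetricSpace X] (hX : IsLengthSpace X) (x y : X) {δ : ℝ}
    (hδ : 0 < δ) : ∃ γ : Path x y, ∃ V : unitInterval → ℝ, V 0 = 0 ∧
      (∀ a b, a ≤ b → dist (γ a) (γ b) ≤ V b - V a) ∧ V 1 ≤ dist x y + δ := by
  have h1 : (⨅ γ : Path x y, pathLength γ) < ENNReal.ofReal (dist x y + δ) := by
    rw [← hX x y, edist_dist]
    exact (ENNReal.ofReal_lt_ofReal_iff (by positivity)).2 (by linarith)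
  obtain ⟨γ, hγ⟩ := iInf_lt_iff.1 h1
  have hfin : ∀ s : Set unitInterval, eVariationOn (fun t => γ t) s ≠ ⊤ := fun s =>
    ((eVariationOn.mono _ (subset_univ s)).trans_lt (hγ.trans ENNReal.ofReal_lt_top)).ne
  refine ⟨γ, fun t => (eVariationOn (fun t => γ t) (univ ∩ Icc 0 t)).toReal, ?_, ?_, ?_⟩
  · have : eVariationOn (fun t => γ t) (univ ∩ Icc (0 : unitInterval) 0) = 0 :=
      eVariationOn.subsingleton _ (by simp)
    simp only [this, ENNReal.toReal_zero]
  · intro a b hab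
    have h2 := eVariationOn.Icc_add_Icc (fun t => γ t) (s := univ) (a := 0) (b := a) (c := b)
      unitInterval.nonneg' hab (mem_univ a)
    have h3 : edist (γ a) (γ b) ≤ eVariationOn (fun t => γ t) (univ ∩ Icc a b) :=
      eVariationOn.edist_le (fun t => γ t) (s := univ ∩ Icc a b) (by simp [hab]) (by simp [hab])
    dsimp only
    rw [← h2, ENNReal.toReal_add (hfin _) (hfin _), add_sub_cancel_left, dist_edist]
    exact ENNReal.toReal_mono (hfin _) h3
  · have h4 := (eVariationOn.mono (fun t => γ t)
      (subset_univ (univ ∩ Icc (0 : unitInterval) 1))).trans hγ.le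
    have h5 := ENNReal.toReal_mono ENNReal.ofReal_ne_top h4
    rwa [ENNReal.toReal_ofReal (by positivity)] at h5

lemma lip_along {X : Type*} [MetricSpace X] {u : X → ℝ} {x y : X} (γ : Path x y)
    {V : unitInterval → ℝ} (hV : ∀ a b, a ≤ b → dist (γ a) (γ b) ≤ V b - V a)
    {L : ℝ} (hL : 0 ≤ L)
    (hloc : ∀ t, ∃ W : Set X, IsOpen W ∧ γ t ∈ W ∧ ∀ p ∈ W, ∀ q ∈ W, |u p - u q| ≤ L * dist p q) :
    ∀ a b, a ≤ b → |u (γ a) - u (γ b)| ≤ L * (V b - V a) := by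
  choose W hWo hWm hW using hloc
  obtain ⟨t, ht0, htm, ⟨N, hN⟩, htc⟩ := exists_monotone_Icc_subset_open_cover_unitInterval
    (c := fun s => γ ⁻¹' (W s)) (fun s => (hWo s).preimage γ.continuous)
    (fun s _ => mem_iUnion.2 ⟨s, hWm s⟩)
  have key : ∀ n, ∀ a b, a ≤ b → b ≤ t n → |u (γ a) - u (γ b)| ≤ L * (V b - V a) := by
    intro n
    induction n with
    | zero =>
      intro a b hab hb
      rw [ht0] at hb
      have hb0 : b = 0 := le_antisymm hb unitInterval.nonneg'
      have ha0 : a = 0 := le_antisymm (hab.trans hb) unitInterval.nonneg'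
      subst hb0; subst ha0; simp
    | succ n ih =>
      have piece : ∀ a b, t n ≤ a → a ≤ b → b ≤ t (n+1) →
          |u (γ a) - u (γ b)| ≤ L * (V b - V a) := by
        intro a b h1 h2 h3
        obtain ⟨i, hi⟩ := htc n
        refine (hW i _ (hi ⟨h1, h2.trans h3⟩) _ (hi ⟨h1.trans h2, h3⟩)).trans ?_
        exact mul_le_mul_of_nonneg_left (hV a b h2) hL
      intro a b hab hb
      rcases le_total b (t n) with h | h
      · exact ih a b hab h
      rcases le_total (t n) a with h' | h'
      · exact piece a b h' hab hb
      have e1 := ih a (t n) h' le_rfl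
      have e2 := piece (t n) b le_rfl h hb
      have e3 := abs_sub_le (u (γ a)) (u (γ (t n))) (u (γ b))
      nlinarith
  intro a b hab
  exact key N a b hab (by rw [hN N le_rfl]; exact unitInterval.le_one')

lemma exists_nhd_of_lipAt_lt {X : Type*} [MetricSpace X] {u : X → ℝ} {x : X} {L : ℝ} (hL : 0 ≤ L)
    (h : lipAt u x < ENNReal.ofReal L) :
    ∃ W : Set X, IsOpen W ∧ x ∈ W ∧ ∀ p ∈ W, ∀ q ∈ W, |u p - u q| ≤ L * dist p q := by
  unfold lipAt at h
  simp only [iInf_lt_iff] at h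
  obtain ⟨W, hW, hx, hlt⟩ := h
  exact ⟨W, hW, hx, (lipOn_le_iff hL).1 hlt.le⟩

lemma crossing {X : Type*} [MetricSpace X] (hX : IsLengthSpace X) {U : Set X} {z x : X}
    (hz : z ∈ U) (hx : x ∉ U) {δ : ℝ} (hδ : 0 < δ) :
    ∃ w ∈ frontier U, dist z w + dist w x ≤ dist z x + δ := by
  obtain ⟨γ, V, hV0, hV, hV1⟩ := exists_curve hX z x hδ
  have hne : (frontier (γ ⁻¹' U)).Nonempty := by
    rw [nonempty_frontier_iff]
    refine ⟨⟨0, by simpa using hz⟩, fun h => hx ?_⟩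
    have : (1 : unitInterval) ∈ γ ⁻¹' U := by rw [h]; trivial
    simpa using this
  obtain ⟨t, ht⟩ := hne
  refine ⟨γ t, γ.continuous.frontier_preimage_subset U ht, ?_⟩
  have h1 := hV 0 t unitInterval.nonneg'
  have h2 := hV t 1 unitInterval.le_one'
  simp only [Path.source, Path.target] at h1 h2
  linarith

lemma exists_mid {X : Type*} [MetricSpace X] (hX : IsLengthSpace X) {x z : X} {ε : ℝ}
    (h : dist x z < 2 * ε) : ∃ y, dist x y < ε ∧ dist y z < ε := by
  have hε : 0 < ε := by linarith [dist_nonneg (x := x) (y := z)]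
  by_cases h1 : dist x z < ε
  · exact ⟨x, by simpa using hε, h1⟩
  push Not at h1
  obtain ⟨w, hw, hd⟩ := crossing hX (U := ball x (dist x z / 2)) (z := x) (x := z)
    (by simp only [mem_ball, dist_self]; linarith)
    (by simp only [mem_ball, not_lt]; rw [dist_comm z x]; linarith)
    (δ := (2 * ε - dist x z) / 4) (by linarith)
  have := frontier_ball_subset_sphere hw
  rw [mem_sphere, dist_comm] at this
  exact ⟨w, by linarith, by linarith⟩

lemma preconn {X : Type*} [MetricSpace X] (hX : IsLengthSpace X) {U : Set X} (hU : IsClopen U)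
    {z : X} (hz : z ∈ U) (x : X) : x ∈ U := by
  by_contra hx
  obtain ⟨w, hw, -⟩ := crossing hX hz hx one_pos
  rw [isClopen_iff_frontier_eq_empty.1 hU] at hw
  exact hw

/-- Comparison with cones from above on balls. -/
lemma cone_cmp {X : Type*} [MetricSpace X] (hX : IsLengthSpace X) {Y : Set X} {F u : X → ℝ}
    (hu : IsAMExtension Y F u) {x : X} {R b : ℝ} (hb : 0 ≤ b)
    (hY : ∀ y ∈ Y, R ≤ dist y x)
    (hT : ∀ z, dist z x < R → u z ≤ u x + b * R) :
    ∀ z, dist z x < R → u z ≤ u x + b * dist z x := by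
  obtain ⟨K, hK, hKl⟩ := hu.exists_lip
  have hc := cont_of_lip hK hKl
  have hcd : Continuous fun z => dist z x := by fun_prop
  have hcC : Continuous fun z => u x + b * dist z x := by fun_prop
  set U : Set X := {z | dist z x < R ∧ u x + b * dist z x < u z} with hUdef
  have hUo : IsOpen U :=
    (isOpen_lt hcd continuous_const).and (isOpen_lt hcC hc)
  have hUY : U ⊆ Yᶜ := fun z hz hzY => absurd (hY z hzY) (not_le.2 hz.1)
  have hxU : x ∉ U := by simp [hUdef]
  have hcl : closure U ⊆ {z | dist z x ≤ R ∧ u x + b * dist z x ≤ u z ∧ u z ≤ u x + b * R} := by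
    refine closure_minimal (fun z hz => ⟨hz.1.le, hz.2.le, hT z hz.1⟩) ?_
    exact (isClosed_le hcd continuous_const).inter
      ((isClosed_le hcC hc).inter (isClosed_le hc continuous_const))
  have hfr : ∀ w ∈ frontier U, u w = u x + b * dist w x := by
    intro w hw
    have h1 := hcl hw.1
    have h2 : w ∉ U := by rw [hUo.frontier_eq] at hw; exact hw.2
    simp only [hUdef, mem_ofPred_eq, not_and, not_lt] at h1 h2
    rcases lt_or_eq_of_le h1.1 with h | h
    · exact le_antisymm (h2 h) h1.2.1
    · have := h1.2; rw [h] at this ⊢; exact le_antisymm this.2 this.1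
  have hlip : lipOn u U ≤ ENNReal.ofReal b := by
    rw [hu.2.2 U hUo hUY, lipOn_le_iff hb]
    intro p hp q hq
    rw [hfr p hp, hfr q hq]
    have : u x + b * dist p x - (u x + b * dist q x) = b * (dist p x - dist q x) := by ring
    rw [this, abs_mul, abs_of_nonneg hb]
    exact mul_le_mul_of_nonneg_left (abs_dist_sub_le p q x) hb
  rw [lipOn_le_iff hb] at hlip
  intro z hz
  by_contra hcon
  push Not at hcon
  have hzU : z ∈ U := ⟨hz, hcon⟩
  have hall : ∀ δ > 0, u z ≤ u x + b * dist z x + b * δ := by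
    intro δ hδ
    obtain ⟨w, hw, hd⟩ := crossing hX hzU hxU hδ
    have hzw : |u z - u w| ≤ b * dist z w := by
      have : closure U ⊆ {w | |u z - u w| ≤ b * dist z w} :=
        closure_minimal (fun q hq => hlip z hzU q hq)
          (isClosed_le (by fun_prop) (by fun_prop))
      exact this hw.1
    have h1 := hfr w hw
    have h2 := le_abs_self (u z - u w)
    nlinarith
  have h3 := hall ((u z - (u x + b * dist z x)) / (2 * (b + 1)))
    (div_pos (by linarith) (by linarith))
  have h4 : b * ((u z - (u x + b * dist z x)) / (2 * (b + 1))) ≤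
      (u z - (u x + b * dist z x)) / 2 := by
    rw [mul_div_assoc', div_le_div_iff₀ (by linarith) (by norm_num)]
    nlinarith
  linarith

lemma AM_le {X : Type*} [MetricSpace X] (hX : IsLengthSpace X) {Y : Set X} (hYn : Y.Nonempty)
    {F u : X → ℝ} (hu : IsAMExtension Y F u) {M : ℝ} (hM : ∀ y ∈ Y, F y ≤ M) (x : X) :
    u x ≤ M := by
  obtain ⟨K, hK, hKl⟩ := hu.exists_lip
  have hc := cont_of_lip hK hKl
  by_contra hx
  push Not at hx
  have hUo : IsOpen {z | M < u z} := isOpen_lt continuous_const hc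
  have hUY : {z | M < u z} ⊆ Yᶜ := fun z hz hzY => by
    have := hM z hzY
    rw [← hu.2.1 hzY] at this
    exact absurd this (not_le.2 hz)
  have hfr : ∀ w ∈ frontier {z | M < u z}, u w = M := fun w hw =>
    (frontier_lt_subset_eq continuous_const hc hw).symm
  have hlip : lipOn u {z | M < u z} ≤ ENNReal.ofReal 0 := by
    rw [hu.2.2 _ hUo hUY, lipOn_le_iff le_rfl]
    intro p hp q hq
    rw [hfr p hp, hfr q hq]; simp
  rw [lipOn_le_iff le_rfl] at hlip
  obtain ⟨y, hy⟩ := hYn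
  obtain ⟨w, hw, -⟩ := crossing hX (U := {z | M < u z}) (z := x) (x := y) hx
    (fun h => hUY h hy) one_pos
  have : closure {z | M < u z} ⊆ {w | |u x - u w| ≤ 0} :=
    closure_minimal (fun q hq => by simpa using hlip x hx q hq)
      (isClosed_le (by fun_prop) (by fun_prop))
  have h1 := this hw.1
  have h2 := hfr w hw
  have h3 := le_abs_self (u x - u w)
  simp only [mem_ofPred_eq] at h1
  linarith

/-- Supremum of `u` over the open ball of radius `r`. -/
def supB {X : Type*} [MetricSpace X] (u : X → ℝ) (r : ℝ) (x : X) : ℝ := sSup (u '' ball x r)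

lemma le_supB {X : Type*} [MetricSpace X] {u : X → ℝ} {M : ℝ} (hM : ∀ x, u x ≤ M) {r : ℝ}
    {x z : X} (h : dist z x < r) : u z ≤ supB u r x :=
  le_csSup ⟨M, by rintro _ ⟨q, -, rfl⟩; exact hM q⟩ ⟨z, h, rfl⟩

lemma supB_le {X : Type*} [MetricSpace X] {u : X → ℝ} {r : ℝ} (hr : 0 < r) {x : X} {c : ℝ}
    (h : ∀ z, dist z x < r → u z ≤ c) : supB u r x ≤ c :=
  csSup_le ⟨u x, x, by simpa using hr, rfl⟩ (by rintro _ ⟨q, hq, rfl⟩; exact h q hq)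

lemma exists_supB {X : Type*} [MetricSpace X] {u : X → ℝ} {r : ℝ} (hr : 0 < r) {x : X} {c : ℝ}
    (h : c < supB u r x) : ∃ z, dist z x < r ∧ c < u z := by
  by_contra hcon
  push Not at hcon
  exact absurd (supB_le hr hcon) (not_le.2 h)

/-- Discrete subharmonicity at `x` at scale `ε`. -/
def DSub {X : Type*} [MetricSpace X] (ε : ℝ) (v : X → ℝ) (x : X) : Prop :=
  ∀ y', dist y' x < ε → ∀ δ > 0, ∃ y, dist y x < ε ∧ 2 * v x - δ ≤ v y + v y'

/-- `supB u ε` is midpoint-convex along radii. -/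
lemma supB_conv {X : Type*} [MetricSpace X] (hX : IsLengthSpace X) {Y : Set X} {F u : X → ℝ}
    (hu : IsAMExtension Y F u) {M : ℝ} (hM : ∀ x, u x ≤ M) {x : X} {ε : ℝ} (hε : 0 < ε)
    (hY : ∀ y ∈ Y, 2 * ε ≤ dist y x) :
    2 * supB u ε x ≤ u x + supB u (2 * ε) x := by
  have hx : u x ≤ supB u (2 * ε) x := le_supB hM (by simpa using hε)
  set b := (supB u (2 * ε) x - u x) / (2 * ε) with hb
  have hb0 : 0 ≤ b := div_nonneg (by linarith) (by linarith)
  have hbR : b * (2 * ε) = supB u (2 * ε) x - u x := by rw [hb]; field_simp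
  have h := cone_cmp hX hu (R := 2 * ε) hb0 hY (fun z hz => by
    rw [hbR]; linarith [le_supB hM hz])
  have : supB u ε x ≤ u x + b * ε := supB_le hε fun z hz => by
    have h1 := h z (by linarith)
    nlinarith
  nlinarith

lemma DSub_supB {X : Type*} [MetricSpace X] (hX : IsLengthSpace X) {Y : Set X} {F u : X → ℝ}
    (hu : IsAMExtension Y F u) {M : ℝ} (hM : ∀ x, u x ≤ M) {x : X} {ε : ℝ} (hε : 0 < ε)
    (hY : ∀ y ∈ Y, 2 * ε ≤ dist y x) : DSub ε (supB u ε) x := by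
  intro y' hy' δ hδ
  have h1 := supB_conv hX hu hM hε hY
  obtain ⟨z, hz, hzu⟩ := exists_supB (u := u) (r := 2 * ε) (x := x)
    (c := supB u (2 * ε) x - δ) (by linarith) (by linarith)
  obtain ⟨y, hy1, hy2⟩ := exists_mid hX (x := x) (z := z) (by rwa [dist_comm])
  refine ⟨y, by rwa [dist_comm], ?_⟩
  have h2 : u z ≤ supB u ε y := le_supB hM (by rwa [dist_comm])
  have h3 : u x ≤ supB u ε y' := le_supB hM (by rwa [dist_comm])
  linarith

/-- Points of large local Lipschitz constant have large discrete upward slope. -/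
lemma up_of_lipAt {X : Type*} [MetricSpace X] (hX : IsLengthSpace X) {Y : Set X} {F u : X → ℝ}
    (hu : IsAMExtension Y F u) {M : ℝ} (hM : ∀ x, u x ≤ M) {x : X} {ε L : ℝ} (hε : 0 < ε)
    (hL : 0 < L) (hY : ∀ y ∈ Y, 2 * ε ≤ dist y x) (hx : ENNReal.ofReal L < lipAt u x) :
    ∃ y, dist y x < ε ∧ supB u ε x + L * ε < supB u ε y := by
  by_contra hcon
  push Not at hcon
  obtain ⟨K, hK, hKl⟩ := hu.exists_lip
  have h1 := supB_conv hX hu hM hε hY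
  have h2 : supB u (2 * ε) x ≤ supB u ε x + L * ε := by
    refine supB_le (by linarith) fun z hz => ?_
    obtain ⟨y, hy1, hy2⟩ := exists_mid hX (x := x) (z := z) (by rwa [dist_comm])
    have := hcon y (by rwa [dist_comm])
    have h2 : u z ≤ supB u ε y := le_supB hM (by rwa [dist_comm])
    linarith
  have h3 : supB u (2 * ε) x ≤ u x + 2 * L * ε := by linarith
  have hall : ∀ L' > L, lipAt u x ≤ ENNReal.ofReal L' := by
    intro L' hL'
    obtain ⟨ρ, hρ, hρ1, hρ2⟩ : ∃ ρ > 0, 3 * ρ ≤ 2 * ε ∧ (K + L') * ρ ≤ 2 * (L' - L) * ε := by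
      refine ⟨min (2 * ε / 3) (2 * (L' - L) * ε / (K + L')), ?_, ?_, ?_⟩
      · refine lt_min (by positivity) (div_pos ?_ (by linarith))
        have : 0 < L' - L := by linarith
        positivity
      · linarith [min_le_left (2 * ε / 3) (2 * (L' - L) * ε / (K + L'))]
      · have := min_le_right (2 * ε / 3) (2 * (L' - L) * ε / (K + L'))
        rw [le_div_iff₀ (by linarith)] at this
        linarith
    have hone : ∀ z, dist z x < ρ → ∀ z', dist z' x < ρ → u z' - u z ≤ L' * dist z' z := by
      intro z hz z' hz'
      have hzz : dist z' z < 2 * ε - ρ := by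
        have := dist_triangle_right z' z x
        linarith
      have := cone_cmp hX hu (x := z) (R := 2 * ε - ρ) (b := L') (by linarith)
        (fun y hy => by
          have := hY y hy
          have := dist_triangle y z x
          linarith)
        (fun q hq => by
          have e1 : u q ≤ supB u (2 * ε) x := le_supB hM (by
            have := dist_triangle q z x
            linarith)
          have e2 := (le_abs_self _).trans (hKl x z)
          rw [dist_comm] at e2
          have e3 : K * dist z x ≤ K * ρ := mul_le_mul_of_nonneg_left hz.le hK
          nlinarith) z' hzz
      linarith
    have hle : lipAt u x ≤ lipOn u (ball x ρ) := by
      unfold lipAt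
      exact iInf_le_of_le (ball x ρ) (iInf_le_of_le isOpen_ball
        (iInf_le_of_le (mem_ball_self hρ) le_rfl))
    refine hle.trans ?_
    rw [lipOn_le_iff (by linarith)]
    intro p hp q hq
    rw [abs_le]
    have e1 := hone p hp q hq
    have e2 := hone q hq p hp
    rw [dist_comm] at e1
    constructor <;> linarith
  have hlt : lipAt u x ≤ ENNReal.ofReal L := by
    refine ge_of_tendsto (x := nhdsWithin L (Ioi L)) (f := fun L' => ENNReal.ofReal L') ?_ ?_
    · exact (ENNReal.continuous_ofReal.tendsto L).mono_left nhdsWithin_le_nhds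
    · filter_upwards [self_mem_nhdsWithin] with L' hL' using hall L' hL'
  exact absurd hx (not_lt.2 hlt)

/-- Large discrete upward slope forces a nearby point of large local Lipschitz constant. -/
lemma exists_lipAt_of_up {X : Type*} [MetricSpace X] (hX : IsLengthSpace X) {u : X → ℝ}
    {M : ℝ} (hM : ∀ x, u x ≤ M) {x y : X} {ε L : ℝ} (hε : 0 < ε)
    (hL : 0 < L) (hy : dist y x < ε) (h : supB u ε x + L * ε < supB u ε y) :
    ∃ z, dist z x < 2 * ε ∧ ENNReal.ofReal L < lipAt u z := by
  by_contra hcon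
  push Not at hcon
  obtain ⟨q, hq, hqu⟩ := exists_supB hε h
  have hqx : dist x q < 2 * ε := by
    have := dist_triangle q y x
    rw [dist_comm]; linarith
  have hmain : ∀ L' > L, u q ≤ supB u ε x + L' * ε := by
    intro L' hL'
    by_cases hqe : dist x q < ε
    · have : u q ≤ supB u ε x := le_supB hM (by rwa [dist_comm])
      nlinarith
    push Not at hqe
    obtain ⟨γ, V, hV0, hV, hV1⟩ := exists_curve hX x q (δ := (2 * ε - dist x q) / 2) (by linarith)
    have hVlt : V 1 < 2 * ε := by linarith
    have hin : ∀ t, dist (γ t) x < 2 * ε := by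
      intro t
      have h1 := hV 0 t unitInterval.nonneg'
      have h2 := hV t 1 unitInterval.le_one'
      have h3 := dist_nonneg (x := γ t) (y := γ 1)
      simp only [Path.source] at h1
      rw [dist_comm]; linarith
    have hlip := lip_along (u := u) γ hV (L := L') (by linarith) (fun t =>
      exists_nhd_of_lipAt_lt (by linarith) ((hcon _ (hin t)).trans_lt
        ((ENNReal.ofReal_lt_ofReal_iff (by linarith)).2 hL')))
    have hcont : Continuous fun t => dist x (γ t) := by fun_prop
    have h01 := hV 0 1 unitInterval.nonneg'
    simp only [Path.source, Path.target] at h01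
    obtain ⟨t, ht⟩ : V 1 / 2 ∈ range fun t => dist x (γ t) := by
      refine mem_range_of_exists_le_of_exists_ge hcont ⟨0, ?_⟩ ⟨1, ?_⟩
      · simp only [Path.source, dist_self]; linarith [dist_nonneg (x := x) (y := q)]
      · simp only [Path.target]; linarith
    simp only at ht
    have h1 := hV 0 t unitInterval.nonneg'
    simp only [Path.source] at h1
    have h2 := hlip t 1 unitInterval.le_one'
    simp only [Path.target] at h2
    have h3 : u (γ t) ≤ supB u ε x := le_supB hM (by rw [dist_comm]; linarith)
    have h4 := neg_abs_le (u (γ t) - u q)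
    have h5 : L' * (V 1 - V t) ≤ L' * ε := mul_le_mul_of_nonneg_left (by linarith) (by linarith)
    linarith
  have := hmain (L + (u q - (supB u ε x + L * ε)) / (2 * ε)) (by
    have : 0 < (u q - (supB u ε x + L * ε)) / (2 * ε) := div_pos (by linarith) (by linarith)
    linarith)
  have e : (u q - (supB u ε x + L * ε)) / (2 * ε) * ε = (u q - (supB u ε x + L * ε)) / 2 := by
    field_simp
  rw [add_mul, e] at this
  linarith

/-- Values of chains leading to the set `A` with cost `κ` per step. -/
inductive ChainVal {X : Type*} [MetricSpace X] (ε κ : ℝ) (v : X → ℝ) (A : Set X) : X → ℝ → Prop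
  | base (x : X) : x ∈ A → ChainVal ε κ v A x (v x)
  | step (x y : X) (c : ℝ) : x ∉ A → dist y x < ε → ChainVal ε κ v A y c →
      ChainVal ε κ v A x (c - κ)

/-- The patched function. -/
def patch {X : Type*} [MetricSpace X] (ε κ : ℝ) (v : X → ℝ) (A : Set X) (x : X) : ℝ :=
  sSup {c | ChainVal ε κ v A x c}

/-- The discrete comparison principle. -/
lemma discrete_cmp {X : Type*} [MetricSpace X] {ε κ : ℝ} (hκ : 0 < κ) {p w : X → ℝ} {Ω : Set X}
    {M c : ℝ} (hpM : ∀ x, p x ≤ M) (hwM : ∀ x, -M ≤ w x)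
    (hsub : ∀ x ∈ Ω, DSub ε p x)
    (hup : ∀ x ∈ Ω, ∀ δ > 0, ∃ y, dist y x < ε ∧ p x + κ - δ ≤ p y)
    (hsup : ∀ x ∈ Ω, DSub ε (fun x => - w x) x)
    (hbd : ∀ x, x ∉ Ω → p x ≤ w x + c) : ∀ x, p x ≤ w x + c := by
  by_contra hcon
  push Not at hcon
  obtain ⟨x0, hx0⟩ := hcon
  set S := range fun x => p x - w x with hS
  have hSb : BddAbove S := ⟨2 * M, by
    rintro _ ⟨x, rfl⟩
    have := hpM x; have := hwM x
    dsimp only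
    linarith⟩
  have hle : ∀ x, p x - w x ≤ sSup S := fun x => le_csSup hSb ⟨x, rfl⟩
  set m := sSup S with hm
  have hmc : c < m := by have := hle x0; linarith
  have hΩ : ∀ x, c < p x - w x → x ∈ Ω := fun x hx => by
    by_contra h
    have := hbd x h; linarith
  have key : ∀ n : ℕ, ∀ δ > 0, ∃ x, m - δ < p x - w x ∧ -M + c + n * (κ / 2) ≤ p x := by
    intro n
    induction n with
    | zero =>
      intro δ hδ
      obtain ⟨_, ⟨x, rfl⟩, hx⟩ := exists_lt_of_lt_csSup (s := S) (b := m - min δ (m - c))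
        ⟨_, x0, rfl⟩ (by have := lt_min hδ (show 0 < m - c by linarith); linarith)
      dsimp only at hx
      have h1 := min_le_left δ (m - c)
      have h2 := min_le_right δ (m - c)
      have := hwM x
      refine ⟨x, by linarith, ?_⟩
      push_cast
      linarith
    | succ n ih =>
      intro δ hδ
      set η := min (δ / 6) (min (m - c) (κ / 4)) with hη
      have hη0 : 0 < η := lt_min (by linarith) (lt_min (by linarith) (by linarith))
      have hη1 : η ≤ δ / 6 := min_le_left _ _
      have hη2 : η ≤ m - c := (min_le_right _ _).trans (min_le_left _ _)
      have hη3 : η ≤ κ / 4 := (min_le_right _ _).trans (min_le_right _ _)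
      obtain ⟨x, hx1, hx2⟩ := ih η hη0
      have hxΩ := hΩ x (by linarith)
      obtain ⟨ya, hya, hya'⟩ := hup x hxΩ η hη0
      have hε : 0 < ε := lt_of_le_of_lt dist_nonneg hya
      obtain ⟨y, hy, hyp⟩ := exists_supB (u := p) hε (x := x) (c := supB p ε x - η) (by linarith)
      have hymax : ∀ q, dist q x < ε → p q ≤ p y + η := fun q hq => by
        have := le_supB hpM hq; linarith
      obtain ⟨y', hy', hw⟩ := hsup x hxΩ y hy η hη0
      obtain ⟨y2, hy2, hp⟩ := hsub x hxΩ y' hy' η hη0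
      have e1 := hymax y2 hy2
      have e2 := hymax ya hya
      have e3 := hle y'
      refine ⟨y, by linarith, ?_⟩
      push_cast
      linarith
  obtain ⟨n, hn⟩ := exists_nat_gt ((2 * M - c) / (κ / 2))
  rw [div_lt_iff₀ (by linarith)] at hn
  obtain ⟨x, -, hx⟩ := key n 1 one_pos
  have := hpM x
  linarith

section patch_lemmas

variable {X : Type*} [MetricSpace X] {ε κ : ℝ} {v : X → ℝ} {A : Set X}

lemma ChainVal.le (hA : ∀ x, x ∉ A → ∀ y, dist y x < ε → v y ≤ v x + κ) {x : X} {c : ℝ}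
    (h : ChainVal ε κ v A x c) : c ≤ v x := by
  induction h with
  | base x hx => exact le_rfl
  | step x y c hx hy _ ih => linarith [hA x hx y hy]

lemma le_patch (hA : ∀ x, x ∉ A → ∀ y, dist y x < ε → v y ≤ v x + κ) {x : X} {c : ℝ}
    (h : ChainVal ε κ v A x c) : c ≤ patch ε κ v A x :=
  le_csSup ⟨v x, fun _ hc => ChainVal.le hA hc⟩ h

lemma patch_le {x : X} (hne : ∃ c, ChainVal ε κ v A x c) {b : ℝ}
    (h : ∀ c, ChainVal ε κ v A x c → c ≤ b) : patch ε κ v A x ≤ b :=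
  csSup_le hne h

lemma patch_eq {x : X} (hx : x ∈ A) : patch ε κ v A x = v x := by
  have : {c | ChainVal ε κ v A x c} = {v x} := by
    ext c
    constructor
    · intro h
      cases h with
      | base _ _ => rfl
      | step _ y c h _ _ => exact absurd hx h
    · rintro rfl
      exact ChainVal.base x hx
  rw [patch, this, csSup_singleton]

lemma patch_up {x : X} (hA : ∀ x, x ∉ A → ∀ y, dist y x < ε → v y ≤ v x + κ)
    (hne : ∃ c, ChainVal ε κ v A x c)
    (hA' : x ∈ A → ∃ y ∈ A, dist y x < ε ∧ v x + κ < v y) {δ : ℝ} (hδ : 0 < δ) :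
    ∃ y, dist y x < ε ∧ patch ε κ v A x + κ - δ ≤ patch ε κ v A y := by
  by_cases hx : x ∈ A
  · obtain ⟨y, hyA, hy, hv⟩ := hA' hx
    refine ⟨y, hy, ?_⟩
    rw [patch_eq hx, patch_eq hyA]; linarith
  · obtain ⟨c, hc, hlt⟩ := exists_lt_of_lt_csSup (s := {c | ChainVal ε κ v A x c}) hne
      (show patch ε κ v A x - δ < _ from sub_lt_self _ hδ)
    have hc' : ChainVal ε κ v A x c := hc
    cases hc' with
    | base _ h => exact absurd h hx
    | step _ y c h hy hval =>
      refine ⟨y, hy, ?_⟩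
      have := le_patch hA hval
      linarith

lemma patch_DSub {x : X} (hA : ∀ x, x ∉ A → ∀ y, dist y x < ε → v y ≤ v x + κ)
    (hne : ∃ c, ChainVal ε κ v A x c)
    (hA' : x ∈ A → ∃ y, dist y x < ε ∧ v x + κ < v y)
    (hA'' : x ∈ A → ∀ y, dist y x < ε → v x + κ < v y → y ∈ A)
    (hv : DSub ε v x) : DSub ε (patch ε κ v A) x := by
  intro y' hy' δ hδ
  by_cases hx : x ∈ A
  · obtain ⟨y0, hy0, hv0⟩ := hA' hx
    have hy0A := hA'' hx y0 hy0 hv0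
    rw [patch_eq hx]
    by_cases hyA : y' ∈ A
    · obtain ⟨y2, hy2, h2⟩ := hv y' hy' δ hδ
      rw [patch_eq hyA]
      by_cases h : v x + κ < v y2
      · exact ⟨y2, hy2, by rw [patch_eq (hA'' hx y2 hy2 h)]; exact h2⟩
      · exact ⟨y0, hy0, by rw [patch_eq hy0A]; linarith⟩
    · refine ⟨y0, hy0, ?_⟩
      have := le_patch hA (ChainVal.step y' x (v x) hyA (by rwa [dist_comm]) (ChainVal.base x hx))
      rw [patch_eq hy0A]
      linarith
  · obtain ⟨y, hy, hup⟩ := patch_up hA hne (fun h => absurd h hx) (half_pos hδ)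
    refine ⟨y, hy, ?_⟩
    suffices h : patch ε κ v A x - κ - δ / 2 ≤ patch ε κ v A y' by linarith
    by_cases hyA : y' ∈ A
    · obtain ⟨y2, hy2, h2⟩ := hv y' hy' (δ / 2) (half_pos hδ)
      have h3 := hA x hx y2 hy2
      have h4 : patch ε κ v A x ≤ v x := patch_le hne fun c hc => ChainVal.le hA hc
      rw [patch_eq hyA]
      linarith
    · have : patch ε κ v A x ≤ patch ε κ v A y' + κ := patch_le hne fun c hc => by
        have := le_patch hA (ChainVal.step y' x c hyA (by rwa [dist_comm]) hc)
        linarith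
      linarith

lemma exists_chainVal (hX : IsLengthSpace X) (hε : 0 < ε) {x0 : X} (hx0 : x0 ∈ A) (x : X) :
    ∃ c, ChainVal ε κ v A x c := by
  have hstep : ∀ x y, dist y x < ε → (∃ c, ChainVal ε κ v A y c) →
      ∃ c, ChainVal ε κ v A x c := by
    rintro x y hxy ⟨c, hc⟩
    by_cases hx : x ∈ A
    · exact ⟨_, ChainVal.base x hx⟩
    · exact ⟨_, ChainVal.step x y c hx hxy hc⟩
  have hclopen : IsClopen {x : X | ∃ c, ChainVal ε κ v A x c} := by
    constructor
    · rw [← isOpen_compl_iff, Metric.isOpen_iff]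
      intro x hx
      refine ⟨ε, hε, fun y hy hyc => hx (hstep x y hy hyc)⟩
    · rw [Metric.isOpen_iff]
      intro x hx
      exact ⟨ε, hε, fun y hy => hstep y x (by rw [dist_comm]; exact hy) hx⟩
  exact preconn hX hclopen (z := x0) ⟨_, ChainVal.base x0 hx0⟩ x

end patch_lemmas

lemma half_stmt {X : Type*} [MetricSpace X] (hX : IsLengthSpace X)
    {Y : Set X} (hY : Y.Nonempty) {F₁ F₂ u₁ u₂ : X → ℝ}
    (hF₁bdd : ∃ M : ℝ, ∀ y ∈ Y, |F₁ y| ≤ M)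
    (hF₂bdd : ∃ M : ℝ, ∀ y ∈ Y, |F₂ y| ≤ M)
    (hu₁ : IsAMExtension Y F₁ u₁) (hu₂ : IsAMExtension Y F₂ u₂)
    {L : ℝ} (hL : 0 < L)
    (hFF : ∀ y ∈ Y, ENNReal.ofReal L < lipAt u₁ y → F₁ y = F₂ y)
    (hsup : ∀ y ∈ Y, ¬ (ENNReal.ofReal L < lipAt u₁ y) → ∀ x, ENNReal.ofReal L < lipAt u₁ x →
      |F₂ y - u₁ x| ≤ L * dist y x)
    {x0 : X} (hx0 : ENNReal.ofReal L < lipAt u₁ x0) (hx0Y : x0 ∉ closure Y) :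
    u₁ x0 ≤ u₂ x0 := by
  obtain ⟨K₁, hK₁, hl₁⟩ := hu₁.exists_lip
  obtain ⟨K₂, hK₂, hl₂⟩ := hu₂.exists_lip
  obtain ⟨M₁, hM₁⟩ := hF₁bdd
  obtain ⟨M₂, hM₂⟩ := hF₂bdd
  set M := max M₁ M₂ with hMdef
  have hu₁M : ∀ x, u₁ x ≤ M := AM_le hX hY hu₁ fun y hy =>
    (le_abs_self _).trans ((hM₁ y hy).trans (le_max_left _ _))
  have hu₂M : ∀ x, - u₂ x ≤ M := AM_le hX hY hu₂.neg fun y hy =>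
    (neg_le_abs _).trans ((hM₂ y hy).trans (le_max_right _ _))
  obtain ⟨r, hr, hrY⟩ : ∃ r > 0, ∀ y ∈ Y, r ≤ dist y x0 := by
    rw [Metric.mem_closure_iff] at hx0Y
    push Not at hx0Y
    obtain ⟨r, hr, h⟩ := hx0Y
    exact ⟨r, hr, fun y hy => by rw [dist_comm]; exact h y hy⟩
  set C := 4 * K₁ + 4 * K₂ + 5 * L with hC
  have hC0 : 0 < C := by positivity
  have hmain : ∀ ε > 0, 2 * ε ≤ r → u₁ x0 ≤ u₂ x0 + C * ε := by
    intro ε hε hεr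
    set v := supB u₁ ε with hv
    set w := fun x => - supB (fun x => - u₂ x) ε x with hw
    set A : Set X := {x | ∃ y, dist y x < ε ∧ v x + L * ε < v y} with hAdef
    have hκ : 0 < L * ε := by positivity
    have hA : ∀ x, x ∉ A → ∀ y, dist y x < ε → v y ≤ v x + L * ε := by
      intro x hx y hy
      by_contra h
      push Not at h
      exact hx ⟨y, hy, h⟩
    have hx0A : x0 ∈ A :=
      up_of_lipAt hX hu₁ hu₁M hε hL (fun y hy => hεr.trans (hrY y hy)) hx0
    have hne : ∀ x, ∃ c, ChainVal ε (L * ε) v A x c := exists_chainVal hX hε hx0A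
    set p := patch ε (L * ε) v A with hp
    have hpv : ∀ x, p x ≤ v x := fun x => patch_le (hne x) fun c hc => ChainVal.le hA hc
    have hvM : ∀ x, v x ≤ M := fun x => supB_le hε fun z _ => hu₁M z
    set Ω : Set X := {x | ∀ y ∈ Y, 3 * ε ≤ dist y x} with hΩ
    have hvsub : ∀ x ∈ Ω, ∀ y, dist y x < ε → DSub ε v y := by
      intro x hx y hy
      refine DSub_supB hX hu₁ hu₁M hε fun q hq => ?_
      have h1 := hx q hq
      have h2 := dist_triangle q y x
      linarith
    have hself : ∀ x : X, dist x x < ε := fun x => by simpa using hε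
    have hA'' : ∀ x ∈ Ω, ∀ y, dist y x < ε → v x + L * ε < v y → y ∈ A := by
      intro x hx y hy hlt
      obtain ⟨z, hz, h⟩ := hvsub x hx y hy x (by rwa [dist_comm])
        ((v y - (v x + L * ε)) / 2) (by linarith)
      exact ⟨z, hz, by linarith⟩
    have hcmp : ∀ x, p x ≤ w x + C * ε := by
      refine discrete_cmp (ε := ε) (κ := L * ε) (Ω := Ω) (M := M) hκ
        (fun x => (hpv x).trans (hvM x)) ?_ ?_ ?_ ?_ ?_
      · intro x
        have : supB (fun x => - u₂ x) ε x ≤ M := supB_le hε fun z _ => hu₂M z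
        simp only [hw]
        linarith
      · intro x hx
        exact patch_DSub hA (hne x) (fun h => h) (fun _ => hA'' x hx) (hvsub x hx x (hself x))
      · intro x hx δ hδ
        refine patch_up hA (hne x) (fun h => ?_) hδ
        obtain ⟨y, hy, hlt⟩ := h
        exact ⟨y, hA'' x hx y hy hlt, hy, hlt⟩
      · intro x hx
        simp only [hw, neg_neg]
        refine DSub_supB hX hu₂.neg hu₂M hε fun q hq => ?_
        have := hx q hq
        linarith
      · intro x hx
        have hx' : ∃ y ∈ Y, dist y x < 3 * ε := by
          by_contra hcon
          push Not at hcon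
          exact hx hcon
        obtain ⟨y, hyY, hyx⟩ := hx'
        have hwx : F₂ y - 4 * K₂ * ε ≤ w x := by
          have : supB (fun x => - u₂ x) ε x ≤ - F₂ y + 4 * K₂ * ε := by
            refine supB_le hε fun z hz => ?_
            have h1 := (le_abs_self _).trans (hl₂ y z)
            have h2 : dist y z ≤ 4 * ε := by
              have := dist_triangle_right y z x; linarith
            have h3 := mul_le_mul_of_nonneg_left h2 hK₂
            rw [hu₂.2.1 hyY] at h1
            linarith
          simp only [hw]
          linarith
        suffices hs : p x ≤ F₂ y + (4 * K₁ + 5 * L) * ε by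
          rw [hC]; nlinarith
        by_cases hyZ : ENNReal.ofReal L < lipAt u₁ y
        · refine (hpv x).trans (supB_le hε fun z hz => ?_)
          have h1 := (le_abs_self _).trans (hl₁ z y)
          have h2 : dist z y ≤ 4 * ε := by
            have := dist_triangle_right z y x; linarith
          have h3 := mul_le_mul_of_nonneg_left h2 hK₁
          rw [hu₁.2.1 hyY, hFF y hyY hyZ] at h1
          nlinarith
        · have hval : ∀ q c, ChainVal ε (L * ε) v A q c →
              c ≤ F₂ y + L * dist y q + (4 * K₁ + 2 * L) * ε := by
            intro q c hc
            induction hc with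
            | base q hq =>
              obtain ⟨q', hq', hlt⟩ := hq
              obtain ⟨z, hz, hzZ⟩ := exists_lipAt_of_up hX hu₁M hε hL hq' hlt
              have h1 := (neg_le_abs _).trans (hsup y hyY hyZ z hzZ)
              have h2 : v q ≤ u₁ z + 4 * K₁ * ε := by
                refine supB_le hε fun z' hz' => ?_
                have e1 := (le_abs_self _).trans (hl₁ z' z)
                have e2 : dist z' z ≤ 4 * ε := by
                  have := dist_triangle_right z' z q; linarith
                have e3 := mul_le_mul_of_nonneg_left e2 hK₁
                linarith
              have h3 : dist y z ≤ dist y q + 2 * ε := by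
                have := dist_triangle_right y z q; linarith
              have h4 := mul_le_mul_of_nonneg_left h3 hL.le
              linarith
            | step q q' c hq hq' _ ih =>
              have h3 : dist y q' ≤ dist y q + ε := by
                have := dist_triangle_right y q' q; linarith
              have h4 := mul_le_mul_of_nonneg_left h3 hL.le
              linarith
          refine patch_le (hne x) fun c hc => ?_
          have h1 := hval x c hc
          have h2 := mul_le_mul_of_nonneg_left hyx.le hL.le
          linarith
    have h1 := hcmp x0
    have h2 : p x0 = v x0 := patch_eq hx0A
    have h3 : u₁ x0 ≤ v x0 := le_supB hu₁M (hself x0)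
    have h4 : - u₂ x0 ≤ supB (fun x => - u₂ x) ε x0 :=
      le_supB (u := fun x => - u₂ x) hu₂M (hself x0)
    simp only [hw] at h1
    linarith
  by_contra hcon
  push Not at hcon
  have hd : 0 < (u₁ x0 - u₂ x0) / (2 * C) := div_pos (by linarith) (by linarith)
  have h := hmain (min (r / 2) ((u₁ x0 - u₂ x0) / (2 * C))) (lt_min (by linarith) hd)
    (by linarith [min_le_left (r / 2) ((u₁ x0 - u₂ x0) / (2 * C))])
  have h2 := min_le_right (r / 2) ((u₁ x0 - u₂ x0) / (2 * C))
  have h3 := mul_le_mul_of_nonneg_left h2 hC0.le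
  have h4 : C * ((u₁ x0 - u₂ x0) / (2 * C)) = (u₁ x0 - u₂ x0) / 2 := by field_simp
  linarith

/-- If `u₁, u₂` are AM extensions of bounded Lipschitz `F₁, F₂` on `Y`,
`Z = {x : Lip_x u₁ > L}`, `F₁ = F₂` on `Z ∩ Y`, `Lip_{Y∖Z} F₂ ≤ L`, and
`|F₂(y) - u₁(x)| ≤ L d(y,x)` for `y ∈ Y∖Z`, `x ∈ Z`, then `u₁ = u₂` on `Z`. -/
theorem stmt11 {X : Type*} [MetricSpace X] (hX : IsLengthSpace X)
    (Y : Set X) (hY : Y.Nonempty) (F₁ F₂ u₁ u₂ : X → ℝ)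
    (hF₁lip : ∃ K : NNReal, LipschitzOnWith K F₁ Y)
    (hF₁bdd : ∃ M : ℝ, ∀ y ∈ Y, |F₁ y| ≤ M)
    (hF₂lip : ∃ K : NNReal, LipschitzOnWith K F₂ Y)
    (hF₂bdd : ∃ M : ℝ, ∀ y ∈ Y, |F₂ y| ≤ M)
    (hu₁ : IsAMExtension Y F₁ u₁) (hu₂ : IsAMExtension Y F₂ u₂)
    (L : ℝ) (hL : 0 < L)
    (Z : Set X) (hZ : Z = {x : X | ENNReal.ofReal L < lipAt u₁ x})
    (hFF : ∀ y ∈ Z ∩ Y, F₁ y = F₂ y)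
    (hLip₂ : lipOn F₂ (Y \ Z) ≤ ENNReal.ofReal L)
    (hsup : ∀ y ∈ Y \ Z, ∀ x ∈ Z, |F₂ y - u₁ x| ≤ L * dist y x) :
    Set.EqOn u₁ u₂ Z := by
  subst hZ
  intro x0 hx0
  have hx0' : ENNReal.ofReal L < lipAt u₁ x0 := hx0
  have hFF' : ∀ y ∈ Y, ENNReal.ofReal L < lipAt u₁ y → F₁ y = F₂ y :=
    fun y hy hyZ => hFF y ⟨hyZ, hy⟩
  have hsup' : ∀ y ∈ Y, ¬ (ENNReal.ofReal L < lipAt u₁ y) → ∀ x,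
      ENNReal.ofReal L < lipAt u₁ x → |F₂ y - u₁ x| ≤ L * dist y x :=
    fun y hy hyZ x hx => hsup y ⟨hy, hyZ⟩ x hx
  by_cases hcl : x0 ∈ closure Y
  · obtain ⟨K₁, hK₁, hl₁⟩ := hu₁.exists_lip
    obtain ⟨K₂, hK₂, hl₂⟩ := hu₂.exists_lip
    by_contra hne
    have hpos : 0 < |u₁ x0 - u₂ x0| := abs_pos.2 (sub_ne_zero.2 hne)
    have hC : 0 < K₁ + K₂ + L := by positivity
    obtain ⟨y, hy, hd⟩ := Metric.mem_closure_iff.1 hcl (|u₁ x0 - u₂ x0| / (K₁ + K₂ + L))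
      (div_pos hpos hC)
    rw [lt_div_iff₀ hC] at hd
    have h2 := hl₂ x0 y
    rw [hu₂.2.1 hy] at h2
    have hd0 := dist_nonneg (x := x0) (y := y)
    have ha : |u₁ x0 - F₂ y| ≤ (K₁ + L) * dist x0 y := by
      by_cases hyZ : ENNReal.ofReal L < lipAt u₁ y
      · have h1 := hl₁ x0 y
        rw [hu₁.2.1 hy, hFF' y hy hyZ] at h1
        nlinarith
      · have h1 := hsup' y hy hyZ x0 hx0'
        rw [abs_sub_comm, dist_comm] at h1
        nlinarith
    have h3 := abs_sub_le (u₁ x0) (F₂ y) (u₂ x0)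
    rw [abs_sub_comm (F₂ y)] at h3
    nlinarith
  · refine le_antisymm (half_stmt hX hY hF₁bdd hF₂bdd hu₁ hu₂ hL hFF' hsup' hx0' hcl) ?_
    have h := half_stmt hX hY (F₁ := fun x => - F₁ x) (F₂ := fun x => - F₂ x)
      (by simpa only [abs_neg] using hF₁bdd) (by simpa only [abs_neg] using hF₂bdd)
      hu₁.neg hu₂.neg hL
      (fun y hy hyZ => by
        rw [lipAt_neg] at hyZ
        simp only [hFF' y hy hyZ])
      (fun y hy hyZ x hx => by
        rw [lipAt_neg] at hyZ hx
        have := hsup' y hy hyZ x hx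
        rwa [← abs_neg, show -(- F₂ y - - u₁ x) = F₂ y - u₁ x by ring])
      (x0 := x0) (by rwa [lipAt_neg]) hcl
    linarith

end
end

section
/- Let X be a set equipped with a symmetric adjacency relation ∼ making (X,∼) a connected graph, let Y ⊆ X be nonempty, let F : Y → ℝ be bounded, and let f : X∖Y → ℝ satisfy inf f > 0 and sup f < ∞. If u₁, u₂ : X → ℝ are bounded functions such that, for i = 1,2, uᵢ = F on Y and uᵢ(x) = (sup{uᵢ(y) : y ∼ x} + inf{uᵢ(y) : y ∼ x})/2 + f(x) for every x ∈ X ∖ Y, then u₁ = u₂. -/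
theorem stmt18_le {X : Type*} (adj : X → X → Prop)
    (hconn : ∀ x y : X, Relation.ReflTransGen adj x y)
    (Y : Set X) (hY : Y.Nonempty) (f : X → ℝ) (c : ℝ) (hc : 0 < c)
    (hf : ∀ x ∉ Y, c ≤ f x) (u v : X → ℝ)
    (hbu : ∃ M : ℝ, ∀ x : X, |u x| ≤ M) (hbv : ∃ M : ℝ, ∀ x : X, |v x| ≤ M)
    (huv : ∀ x ∈ Y, u x = v x)
    (hu : ∀ x ∉ Y,
      u x = (sSup (u '' {y | adj x y}) + sInf (u '' {y | adj x y})) / 2 + f x)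
    (hv : ∀ x ∉ Y,
      v x = (sSup (v '' {y | adj x y}) + sInf (v '' {y | adj x y})) / 2 + f x) (x₀ : X) :
    u x₀ ≤ v x₀ := by
  by_contra! hlt
  obtain ⟨A, hA⟩ := hbu
  obtain ⟨B, hB⟩ := hbv
  have hne : ∀ x ∉ Y, ∃ y, adj x y := by
    intro x hx
    obtain ⟨y, hy⟩ := hY
    rcases (hconn x y).cases_head with h | ⟨z, hz, _⟩
    · exact absurd (h ▸ hy) hx
    · exact ⟨z, hz⟩
  have hA1 : ∀ x, -A ≤ u x ∧ u x ≤ A := fun x => abs_le.mp (hA x)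
  have hB1 : ∀ x, -B ≤ v x ∧ v x ≤ B := fun x => abs_le.mp (hB x)
  have hwb : BddAbove (Set.range fun x => u x - v x) := by
    refine ⟨A + B, ?_⟩
    rintro _ ⟨x, rfl⟩
    have := hA1 x
    have := hB1 x
    dsimp only
    linarith
  obtain ⟨M, hM⟩ : ∃ M, M = sSup (Set.range fun x => u x - v x) := ⟨_, rfl⟩
  have hwM : ∀ x, u x - v x ≤ M := fun x => hM ▸ le_csSup hwb ⟨x, rfl⟩
  have hMpos : 0 < M := by have := hwM x₀; linarith
  have key : ∀ n : ℕ, ∀ t > 0, ∃ x, M - t ≤ u x - v x ∧ v x ≤ B - n * (c / 2) := by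
    intro n
    induction n with
    | zero =>
      intro t ht
      obtain ⟨_, ⟨x, rfl⟩, hx⟩ := exists_lt_of_lt_csSup (s := Set.range fun x => u x - v x)
        ⟨_, ⟨x₀, rfl⟩⟩ (show M - t < _ by rw [← hM]; linarith)
      exact ⟨x, hx.le, by have := hB1 x; simp; linarith⟩
    | succ n ih =>
      intro t ht
      have hm : 0 < min t M := lt_min ht hMpos
      have hm1 := min_le_left t M
      have hm2 := min_le_right t M
      obtain ⟨x, hx1, hx2⟩ := ih (min t M / 4) (by linarith)
      have hxY : x ∉ Y := fun h => by have := huv x h; linarith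
      obtain ⟨z, hz⟩ := hne x hxY
      have bau : BddAbove (u '' {y | adj x y}) := ⟨A, by rintro _ ⟨y, _, rfl⟩; exact (hA1 y).2⟩
      have bbu : BddBelow (u '' {y | adj x y}) := ⟨-A, by rintro _ ⟨y, _, rfl⟩; exact (hA1 y).1⟩
      have bav : BddAbove (v '' {y | adj x y}) := ⟨B, by rintro _ ⟨y, _, rfl⟩; exact (hB1 y).2⟩
      have bbv : BddBelow (v '' {y | adj x y}) := ⟨-B, by rintro _ ⟨y, _, rfl⟩; exact (hB1 y).1⟩
      have hS : sSup (u '' {y | adj x y}) ≤ sSup (v '' {y | adj x y}) + M := by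
        refine csSup_le ⟨_, z, hz, rfl⟩ ?_
        rintro _ ⟨y, hy, rfl⟩
        have := le_csSup bav ⟨y, hy, rfl⟩
        have := hwM y
        linarith
      have hIS : sInf (v '' {y | adj x y}) ≤ sSup (v '' {y | adj x y}) :=
        (csInf_le bbv ⟨z, hz, rfl⟩).trans (le_csSup bav ⟨z, hz, rfl⟩)
      have e1 := hu x hxY
      have e2 := hv x hxY
      have hfx := hf x hxY
      have hη : 0 < min (t / 2) (c / 2) := lt_min (by linarith) (by linarith)
      have hη1 := min_le_left (t / 2) (c / 2)
      have hη2 := min_le_right (t / 2) (c / 2)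
      obtain ⟨_, ⟨y, hy, rfl⟩, hlt'⟩ := exists_lt_of_csInf_lt (s := v '' {y | adj x y})
        ⟨_, z, hz, rfl⟩ (lt_add_of_pos_right _ hη)
      have hIy := csInf_le bbu ⟨y, hy, rfl⟩
      refine ⟨y, by linarith, ?_⟩
      push_cast
      linarith
  obtain ⟨n, hn⟩ := exists_nat_gt (2 * B / (c / 2))
  rw [div_lt_iff₀ (by linarith)] at hn
  obtain ⟨x, _, hx⟩ := key n 1 one_pos
  have := hB1 x
  linarith

/-- Uniqueness for the discrete inhomogeneous equation: on a connected graph with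
nonempty terminal set `Y`, bounded terminal payoff `F`, and running payoff `f` with
`inf f > 0` and `sup f < ∞`, any two bounded functions agreeing with `F` on `Y` and
satisfying `u x = (sup {u y : y ∼ x} + inf {u y : y ∼ x}) / 2 + f x` off `Y`
coincide. -/
theorem stmt18 {X : Type*} (adj : X → X → Prop) (hadj : Symmetric adj)
    (hconn : ∀ x y : X, Relation.ReflTransGen adj x y)
    (Y : Set X) (hY : Y.Nonempty) (F : X → ℝ)
    (hF : ∃ M : ℝ, ∀ y ∈ Y, |F y| ≤ M)
    (f : X → ℝ)
    (hfpos : ∃ c : ℝ, 0 < c ∧ ∀ x ∉ Y, c ≤ f x)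
    (hfbdd : ∃ M : ℝ, ∀ x ∉ Y, f x ≤ M)
    (u₁ u₂ : X → ℝ)
    (hb₁ : ∃ M : ℝ, ∀ x : X, |u₁ x| ≤ M) (hb₂ : ∃ M : ℝ, ∀ x : X, |u₂ x| ≤ M)
    (hY₁ : Set.EqOn u₁ F Y) (hY₂ : Set.EqOn u₂ F Y)
    (he₁ : ∀ x ∉ Y,
      u₁ x = (sSup (u₁ '' {y | adj x y}) + sInf (u₁ '' {y | adj x y})) / 2 + f x)
    (he₂ : ∀ x ∉ Y,
      u₂ x = (sSup (u₂ '' {y | adj x y}) + sInf (u₂ '' {y | adj x y})) / 2 + f x) :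
    u₁ = u₂ := by
  obtain ⟨c, hc, hf⟩ := hfpos
  funext x
  apply le_antisymm
  · exact stmt18_le adj hconn Y hY f c hc hf u₁ u₂ hb₁ hb₂
      (fun x hx => (hY₁ hx).trans (hY₂ hx).symm) he₁ he₂ x
  · exact stmt18_le adj hconn Y hY f c hc hf u₂ u₁ hb₂ hb₁
      (fun x hx => (hY₂ hx).trans (hY₁ hx).symm) he₂ he₁ x
end

section
/- Let X be a length space, let V ⊆ X be an open set, and let w : X → ℝ be Lipschitz. Then Lip_V w ≤ max( sup_{x ∈ V} Lip_x w , Lip_{∂V} w ), where Lip_x w := inf{Lip_W w : W ⊆ X open, x ∈ W}. -/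
open Metric Set

noncomputable section

theorem aux_term {X : Type*} [MetricSpace X] (u : X → ℝ) (x y : X) (hxy : x ≠ y) (N : ENNReal) :
    ENNReal.ofReal (|u x - u y| / dist x y) ≤ N ↔ edist (u x) (u y) ≤ N * edist x y := by
  have hd : 0 < dist x y := dist_pos.2 hxy
  rw [ENNReal.ofReal_div_of_pos hd, edist_dist, edist_dist, Real.dist_eq,
    ENNReal.div_le_iff (by simpa using hxy) ENNReal.ofReal_ne_top]

theorem aux_lipOn {X : Type*} [MetricSpace X] (u : X → ℝ) (S : Set X) (N : ENNReal) :
    lipOn u S ≤ N ↔ ∀ x ∈ S, ∀ y ∈ S, edist (u x) (u y) ≤ N * edist x y := by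
  unfold lipOn
  simp only [iSup_le_iff]
  constructor
  · intro h x hx y hy
    by_cases hxy : x = y
    · subst hxy; simp
    · exact (aux_term u x y hxy N).1 (h x hx y hy hxy)
  · intro h x hx y hy hxy
    exact (aux_term u x y hxy N).2 (h x hx y hy)

theorem aux_closed {X : Type*} [MetricSpace X] (V : Set X) (w : X → ℝ) (N : ENNReal)
    (hN : ∀ x ∈ V, lipAt w x < N) (g : ℝ → X) (hg : Continuous g) (a b : ℝ) (hab : a ≤ b)
    (h : ∀ t ∈ Icc a b, g t ∈ V) :
    edist (w (g a)) (w (g b)) ≤ N * eVariationOn g (Icc a b) := by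
  have hloc : ∀ x : V, ∃ W : Set X, IsOpen W ∧ (x : X) ∈ W ∧ lipOn w W ≤ N := by
    intro x
    have := hN x x.2
    unfold lipAt at this
    simp only [iInf_lt_iff] at this
    obtain ⟨W, h1, h2, h3⟩ := this
    exact ⟨W, h1, h2, h3.le⟩
  choose W hWo hxW hWN using hloc
  obtain ⟨t, ht0, htm, ⟨n, htn⟩, hsub⟩ := exists_monotone_Icc_subset_open_cover_Icc hab
    (c := fun x : V => {s : Icc a b | g s ∈ W x})
    (fun x => (hWo x).preimage (hg.comp continuous_subtype_val))
    (fun s _ => mem_iUnion.2 ⟨⟨g s, h s s.2⟩, hxW ⟨g s, h s s.2⟩⟩)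
  have key : ∀ k, edist (w (g a)) (w (g (t k))) ≤ N * eVariationOn g (Icc a (t k)) := by
    intro k
    induction k with
    | zero => rw [ht0]; simp
    | succ k ih =>
      have hle : (t k : ℝ) ≤ t (k+1) := htm (Nat.le_succ k)
      obtain ⟨x, hx⟩ := hsub k
      have h1 : edist (w (g (t k))) (w (g (t (k+1)))) ≤ N * edist (g (t k)) (g (t (k+1))) :=
        (aux_lipOn w (W x) N).1 (hWN x) _ (hx ⟨le_refl _, hle⟩) _ (hx ⟨hle, le_refl _⟩)
      have h2 : edist (g (t k)) (g (t (k+1))) ≤ eVariationOn g (Icc (t k : ℝ) (t (k+1))) :=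
        eVariationOn.edist_le g ⟨le_refl _, hle⟩ ⟨hle, le_refl _⟩
      have h3 := eVariationOn.Icc_add_Icc g (s := univ) (t k).2.1 hle (mem_univ _)
      simp only [univ_inter] at h3
      calc _ ≤ edist (w (g a)) (w (g (t k))) + edist (w (g (t k))) (w (g (t (k+1)))) :=
            edist_triangle _ _ _
        _ ≤ N * eVariationOn g (Icc a (t k)) + N * eVariationOn g (Icc (t k : ℝ) (t (k+1))) := by
            gcongr
            exact h1.trans (by gcongr)
        _ = _ := by rw [← mul_add, h3]
  have := key n
  rwa [htn n le_rfl] at this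

theorem aux_open {X : Type*} [MetricSpace X] (V : Set X) (w : X → ℝ) (hw : Continuous w)
    (N : ENNReal)
    (hN : ∀ x ∈ V, lipAt w x < N) (g : ℝ → X) (hg : Continuous g) (a b : ℝ) (hab : a ≤ b)
    (h : ∀ t ∈ Ioo a b, g t ∈ V) :
    edist (w (g a)) (w (g b)) ≤ N * eVariationOn g (Icc a b) := by
  rcases hab.eq_or_lt with rfl | hab
  · simp
  have hcl : IsClosed {p : ℝ × ℝ |
      edist (w (g p.1)) (w (g p.2)) ≤ N * eVariationOn g (Icc a b)} :=
    isClosed_le (by fun_prop) continuous_const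
  have hle : ∀ p q, p ∈ Ioo a b → q ∈ Ioo a b → p ≤ q →
      edist (w (g p)) (w (g q)) ≤ N * eVariationOn g (Icc a b) := by
    intro p q hp hq hpq
    refine (aux_closed V w N hN g hg p q hpq fun t ht =>
      h t ⟨hp.1.trans_le ht.1, ht.2.trans_lt hq.2⟩).trans ?_
    gcongr
    exact eVariationOn.mono g (Icc_subset_Icc hp.1.le hq.2.le)
  have hsub : Ioo a b ×ˢ Ioo a b ⊆ {p : ℝ × ℝ |
      edist (w (g p.1)) (w (g p.2)) ≤ N * eVariationOn g (Icc a b)} := by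
    rintro ⟨p, q⟩ ⟨hp, hq⟩
    rcases le_total p q with hpq | hpq
    · exact hle p q hp hq hpq
    · show edist (w (g p)) (w (g q)) ≤ _
      rw [edist_comm]; exact hle q p hq hp hpq
  have := closure_minimal hsub hcl
  rw [closure_prod_eq, closure_Ioo hab.ne] at this
  exact this (a := (a, b)) ⟨left_mem_Icc.2 hab.le, right_mem_Icc.2 hab.le⟩

theorem aux_path {X : Type*} [MetricSpace X] (V : Set X) (hV : IsOpen V) (w : X → ℝ)
    (hw : Continuous w) (N : ENNReal) (hN : ∀ x ∈ V, lipAt w x < N)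
    (hF : lipOn w (frontier V) ≤ N) (g : ℝ → X) (hg : Continuous g)
    (h0 : g 0 ∈ V) (h1 : g 1 ∈ V) :
    edist (w (g 0)) (w (g 1)) ≤ N * eVariationOn g (Icc 0 1) := by
  by_cases hall : ∀ t ∈ Icc (0:ℝ) 1, g t ∈ V
  · exact aux_closed V w N hN g hg 0 1 zero_le_one hall
  push Not at hall
  obtain ⟨r, hr, hrV⟩ := hall
  have hc : IsCompact (Icc (0:ℝ) 1 ∩ g ⁻¹' Vᶜ) :=
    isCompact_Icc.inter_right (hV.isClosed_compl.preimage hg)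
  have hne : (Icc (0:ℝ) 1 ∩ g ⁻¹' Vᶜ).Nonempty := ⟨r, hr, hrV⟩
  obtain ⟨s, ⟨hs, hsV⟩, hsl⟩ := hc.exists_isLeast hne
  obtain ⟨t, ⟨ht, htV⟩, htl⟩ := hc.exists_isGreatest hne
  have hst : s ≤ t := hsl ⟨ht, htV⟩
  have hs0 : 0 < s := hs.1.lt_of_ne (by rintro rfl; exact hsV h0)
  have ht1 : t < 1 := ht.2.lt_of_ne (by rintro rfl; exact htV h1)
  have hA : ∀ r ∈ Ioo 0 s, g r ∈ V := by
    intro r hr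
    by_contra hc
    exact absurd (hsl ⟨⟨hr.1.le, hr.2.le.trans hs.2⟩, hc⟩) (not_le.2 hr.2)
  have hB : ∀ r ∈ Ioo t 1, g r ∈ V := by
    intro r hr
    by_contra hc
    exact absurd (htl ⟨⟨ht.1.trans hr.1.le, hr.2.le⟩, hc⟩) (not_le.2 hr.1)
  have hsF : g s ∈ frontier V := by
    rw [hV.frontier_eq]
    refine ⟨map_mem_closure hg ?_ hA, hsV⟩
    rw [closure_Ioo hs0.ne]; exact right_mem_Icc.2 hs0.le
  have htF : g t ∈ frontier V := by
    rw [hV.frontier_eq]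
    refine ⟨map_mem_closure hg ?_ hB, htV⟩
    rw [closure_Ioo ht1.ne]; exact left_mem_Icc.2 ht1.le
  have e1 := aux_open V w hw N hN g hg 0 s hs.1 hA
  have e3 := aux_open V w hw N hN g hg t 1 ht.2 hB
  have e2 : edist (w (g s)) (w (g t)) ≤ N * eVariationOn g (Icc s t) :=
    ((aux_lipOn w _ N).1 hF _ hsF _ htF).trans (by
      gcongr
      exact eVariationOn.edist_le g (left_mem_Icc.2 hst) (right_mem_Icc.2 hst))
  have v1 := eVariationOn.Icc_add_Icc g (s := univ) hs.1 hst (mem_univ _)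
  have v2 := eVariationOn.Icc_add_Icc g (s := univ) ht.1 ht.2 (mem_univ _)
  simp only [univ_inter] at v1 v2
  calc _ ≤ edist (w (g 0)) (w (g s)) + edist (w (g s)) (w (g t)) + edist (w (g t)) (w (g 1)) :=
        edist_triangle4 _ _ _ _
    _ ≤ N * eVariationOn g (Icc 0 s) + N * eVariationOn g (Icc s t)
        + N * eVariationOn g (Icc t 1) := by gcongr
    _ = _ := by rw [← mul_add, v1, ← mul_add, v2]

/-- In a length space, for an open set `V` and a Lipschitz `w`,
`Lip_V w ≤ max (sup_{x ∈ V} Lip_x w) (Lip_{∂V} w)`. -/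
theorem stmt19 {X : Type*} [MetricSpace X] (hX : IsLengthSpace X)
    (V : Set X) (hV : IsOpen V) (w : X → ℝ) (hw : ∃ K : NNReal, LipschitzWith K w) :
    lipOn w V ≤ max (⨆ x ∈ V, lipAt w x) (lipOn w (frontier V)) := by
  obtain ⟨K, hK⟩ := hw
  refine le_of_forall_gt_imp_ge_of_dense fun N hMN => ?_
  by_cases hNt : N = ⊤
  · rw [hNt]; exact le_top
  have hN0 : N ≠ 0 := (pos_of_gt hMN).ne'
  rw [aux_lipOn]
  intro x hx y hy
  rw [hX x y, ENNReal.mul_iInf_of_ne hN0 hNt]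
  refine le_iInf fun γ => ?_
  have := aux_path V hV w hK.continuous N
    (fun z hz => ((le_iSup₂ (f := fun z (_ : z ∈ V) => lipAt w z) z hz).trans
      (le_max_left _ _)).trans_lt hMN)
    ((le_max_right _ _).trans hMN.le) γ.extend γ.continuous_extend (by simpa) (by simpa)
  simp only [Path.extend_zero, Path.extend_one] at this
  refine this.trans ?_
  gcongr
  exact eVariationOn.comp_le_of_monotoneOn (fun t => γ t) (projIcc (0:ℝ) 1 zero_le_one)
    ((monotone_projIcc _).monotoneOn _) (mapsTo_univ _ _)

end
end
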